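/- The infinite series ∑_{n=1}^{∞} 1/((4n+1)(4n−1)(4n−3)) converges to (π − 2)/16. -/

import Mathlib

open Real

/-!
With `a = 4n + 1`, partial fractions give
`1 / (a (a + 2) (a + 4)) = (1/4) (1/a - 1/(a + 2)) - (1/8) (1/a - 1/(a + 4))`.
The first bracket groups two consecutive terms of Leibniz' series for `π / 4`, and the second
telescopes, so the sum is `π / 16 - 1 / 8`. Since the terms are nonnegative, convergence of the
partial sums suffices for `HasSum`.
-/

/-- The `N`-th partial sum in terms of the `2N`-th partial sum of Leibniz' series. -/
lemma partial_sum_eq (N : ℕ) :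
    ∑ n ∈ Finset.range N,
        1 / ((4*((n:ℝ)+1)+1) * (4*((n:ℝ)+1)-1) * (4*((n:ℝ)+1)-3)) =
      (1 / 4) * ∑ i ∈ Finset.range (2 * N), (-1 : ℝ) ^ i / (2 * i + 1)
        - (1 / 8) * (1 - 1 / (4 * (N : ℝ) + 1)) := by
  induction N with
  | zero => simp
  | succ k ih =>
    have heven : (-1 : ℝ) ^ (2 * k) = 1 := by simp [pow_mul]
    rw [Finset.sum_range_succ, ih, show 2 * (k + 1) = 2 * k + 1 + 1 by ring,
      Finset.sum_range_succ, Finset.sum_range_succ, pow_succ, heven]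
    push_cast
    have hk : (0 : ℝ) ≤ k := k.cast_nonneg
    have h1 : (4 * (k : ℝ) + 1) ≠ 0 := by positivity
    have h3 : (4 * (k : ℝ) + 3) ≠ 0 := by positivity
    have h5 : (4 * (k : ℝ) + 5) ≠ 0 := by positivity
    rw [show 4 * ((k : ℝ) + 1) + 1 = 4 * k + 5 by ring,
      show 4 * ((k : ℝ) + 1) - 1 = 4 * k + 3 by ring,
      show 4 * ((k : ℝ) + 1) - 3 = 4 * k + 1 by ring,
      show 2 * (2 * (k : ℝ)) + 1 = 4 * k + 1 by ring,
      show 2 * (2 * (k : ℝ) + 1) + 1 = 4 * k + 3 by ring]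
    field_simp
    ring

theorem stmt_9 :
    HasSum (fun n : ℕ => 1 / ((4*((n:ℝ)+1)+1) * (4*((n:ℝ)+1)-1) * (4*((n:ℝ)+1)-3))) ((π - 2) / 16) := by
  rw [hasSum_iff_tendsto_nat_of_nonneg]
  · simp_rw [partial_sum_eq]
    have hL := Real.tendsto_sum_pi_div_four.comp
      (Filter.tendsto_id.const_mul_atTop' (show 0 < 2 by norm_num))
    have h0 : Filter.Tendsto (fun N : ℕ => 1 / (4 * (N : ℝ) + 1)) Filter.atTop (nhds 0) := by
      simp_rw [one_div]
      exact (Filter.tendsto_atTop_add_const_right _ _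
        (tendsto_natCast_atTop_atTop.const_mul_atTop (by norm_num))).inv_tendsto_atTop
    have h := (hL.const_mul (1 / 4)).sub ((h0.const_sub 1).const_mul (1 / 8))
    rw [show (π - 2) / 16 = 1 / 4 * (π / 4) - 1 / 8 * (1 - 0) by ring]
    exact h
  · intro n
    have hn : (0 : ℝ) ≤ n := n.cast_nonneg
    have h1 : 0 ≤ 4 * ((n : ℝ) + 1) - 1 := by linarith
    have h3 : 0 ≤ 4 * ((n : ℝ) + 1) - 3 := by linarith
    positivity
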